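/- arXiv:2602.03543 — 2 statements merged into one kernel-verified Lean document; each statement's English description precedes it below -/
import Mathlib

section
/- Let m ≥ 1, v_1, …, v_m ≥ 0, p_1, …, p_m ≥ 0 with Σ_{k=1}^m p_k = 1, and c > 0. For each α ∈ [0,1] let τ(α) denote the grade, i.e., the unique real with Σ_{k=1}^m p_k · max(α·v_k − τ(α), 0) = c. Then the function α ↦ τ(α) on [0,1] is continuous and piecewise linear with at most m+1 pieces. -/
/-- A function `f : ℝ → ℝ` is piecewise linear on `[0,1]` with at most `k` pieces:
there are breakpoints `0 = a_0 ≤ a_1 ≤ … ≤ a_k = 1` and affine functions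
`g_j(x) = s_j·x + b_j` with `f = g_j` on `[a_{j−1}, a_j]`. -/
def PiecewiseLinearOn (f : ℝ → ℝ) (k : ℕ) : Prop :=
  ∃ a : Fin (k + 1) → ℝ, a 0 = 0 ∧ a (Fin.last k) = 1 ∧ Monotone a ∧
    ∃ s b : Fin k → ℝ, ∀ j : Fin k, ∀ x ∈ Set.Icc (a j.castSucc) (a j.succ),
      f x = s j * x + b j

/-!
The expected excess `t ↦ ∑ k, p k * max (x k - t) 0` is antitone, and strictly so where it is
positive, so comparing the grade of `x` with a number `u` amounts to comparing the expected excess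
at `u` with `c`. Hence the grade is a `1`-Lipschitz function of `x` for the sup norm, which gives
continuity. By homogeneity, `τ(α) ≤ α v_k` if and only if `α D_k ≤ c`, where `D_k` is the expected
excess of `v` over `v_k`. The `m` thresholds `c / D_k` therefore cut `[0,1]` into at most `m + 1`
intervals on which no term `α v_k - τ(α)` changes sign, and there the defining equation is linear.
-/

open Set

variable {ι : Type*} [Fintype ι] {p x y v : ι → ℝ} {c t u α : ℝ}

/-- The expected excess over the level `t` of the outcome values `x`, taken with weights `p`: an
expectation when `p` is a probability vector. -/
def expectedExcess (p x : ι → ℝ) (t : ℝ) : ℝ :=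
  ∑ k, p k * max (x k - t) 0

/-- `t` is a grade of the outcome values `x`, with weights `p` and cost `c`. -/
def IsGrade (p : ι → ℝ) (c : ℝ) (x : ι → ℝ) (t : ℝ) : Prop :=
  expectedExcess p x t = c

theorem expectedExcess_le_expectedExcess (hp : ∀ k, 0 ≤ p k) (h : ∀ k, x k - t ≤ y k - u) :
    expectedExcess p x t ≤ expectedExcess p y u :=
  Finset.sum_le_sum fun k _ => mul_le_mul_of_nonneg_left (max_le_max_right 0 (h k)) (hp k)

theorem expectedExcess_nonneg (hp : ∀ k, 0 ≤ p k) : 0 ≤ expectedExcess p x t :=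
  Finset.sum_nonneg fun k _ => mul_nonneg (hp k) (le_max_right _ _)

theorem antitone_expectedExcess (hp : ∀ k, 0 ≤ p k) : Antitone (expectedExcess p x) :=
  fun _ _ h => expectedExcess_le_expectedExcess hp fun k => sub_le_sub_left h (x k)

theorem expectedExcess_lt_expectedExcess_of_pos (hp : ∀ k, 0 ≤ p k) (htu : t < u)
    (hpos : 0 < expectedExcess p x u) : expectedExcess p x u < expectedExcess p x t := by
  obtain ⟨k, -, hk⟩ := (Finset.sum_pos_iff_of_nonneg fun k _ =>
    mul_nonneg (hp k) (le_max_right (x k - u) 0)).1 hpos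
  have hpk : 0 < p k := pos_of_mul_pos_left hk (le_max_right _ _)
  have hxk : 0 < x k - u := by
    simpa using pos_of_mul_pos_right hk (hp k)
  refine Finset.sum_lt_sum
    (fun j _ => mul_le_mul_of_nonneg_left (max_le_max_right 0 (sub_le_sub_left htu.le _)) (hp j))
    ⟨k, Finset.mem_univ k, mul_lt_mul_of_pos_left ?_ hpk⟩
  rw [max_eq_left hxk.le]
  exact lt_max_of_lt_left (sub_lt_sub_left htu _)

theorem expectedExcess_smul (hα : 0 ≤ α) (p x : ι → ℝ) (t : ℝ) :
    expectedExcess p (α • x) (α * t) = α * expectedExcess p x t := by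
  rw [expectedExcess, expectedExcess, Finset.mul_sum]
  refine Finset.sum_congr rfl fun k _ => ?_
  rw [Pi.smul_apply, smul_eq_mul, ← mul_sub, mul_left_comm, mul_max_of_nonneg _ _ hα, mul_zero]

namespace IsGrade

theorem le_iff (ht : IsGrade p c x t) (hp : ∀ k, 0 ≤ p k) (hc : 0 < c) :
    t ≤ u ↔ expectedExcess p x u ≤ c := by
  obtain rfl : expectedExcess p x t = c := ht
  refine ⟨fun h => antitone_expectedExcess hp h, fun h => ?_⟩
  by_contra! hut
  exact (expectedExcess_lt_expectedExcess_of_pos hp hut hc).not_ge h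

theorem ge_iff (ht : IsGrade p c x t) (hp : ∀ k, 0 ≤ p k) (hc : 0 < c) :
    u ≤ t ↔ c ≤ expectedExcess p x u := by
  obtain rfl : expectedExcess p x t = c := ht
  refine ⟨fun h => antitone_expectedExcess hp h, fun h => ?_⟩
  by_contra! htu
  exact (expectedExcess_lt_expectedExcess_of_pos hp htu (hc.trans_le h)).not_ge h

theorem le_add_dist (ht : IsGrade p c x t) (hu : IsGrade p c y u) (hp : ∀ k, 0 ≤ p k)
    (hc : 0 < c) : t ≤ u + dist x y := by
  refine (ht.le_iff hp hc).2 ((expectedExcess_le_expectedExcess hp fun k => ?_).trans_eq hu)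
  have hk : x k - y k ≤ dist x y := (le_abs_self _).trans (dist_le_pi_dist x y k)
  linarith

theorem dist_le_dist (ht : IsGrade p c x t) (hu : IsGrade p c y u) (hp : ∀ k, 0 ≤ p k)
    (hc : 0 < c) : dist t u ≤ dist x y := by
  rw [Real.dist_eq, abs_sub_le_iff, sub_le_iff_le_add', sub_le_iff_le_add']
  exact ⟨ht.le_add_dist hu hp hc, dist_comm x y ▸ hu.le_add_dist ht hp hc⟩

theorem mul_sum_eq (ht : IsGrade p c x t) {A : Finset ι} (hA : ∀ k ∈ A, t ≤ x k)
    (hA' : ∀ k ∉ A, x k ≤ t) : t * ∑ k ∈ A, p k = ∑ k ∈ A, p k * x k - c := by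
  classical
  have hsum : ∑ k ∈ A, p k * (x k - t) = c := by
    rw [← show ∑ k, p k * max (x k - t) 0 = c from ht]
    refine Finset.sum_subset_zero_on_sdiff A.subset_univ (fun k hk => ?_) fun k hk => ?_
    · rw [max_eq_right (sub_nonpos.2 (hA' k (Finset.mem_sdiff.1 hk).2)), mul_zero]
    · rw [max_eq_left (sub_nonneg.2 (hA k hk))]
  rw [← hsum, Finset.mul_sum, ← Finset.sum_sub_distrib]
  exact Finset.sum_congr rfl fun k _ => by ring

theorem sum_ne_zero (ht : IsGrade p c x t) (hp : ∀ k, 0 ≤ p k) (hc : 0 < c) {A : Finset ι}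
    (hA : ∀ k ∈ A, t ≤ x k) (hA' : ∀ k ∉ A, x k ≤ t) : ∑ k ∈ A, p k ≠ 0 := by
  intro h
  have hpA := (Finset.sum_eq_zero_iff_of_nonneg fun k _ => hp k).1 h
  have hpx : ∑ k ∈ A, p k * x k = 0 :=
    Finset.sum_eq_zero fun k hk => by rw [hpA k hk, zero_mul]
  have heq := ht.mul_sum_eq hA hA'
  rw [h, hpx] at heq
  linarith

theorem le_mul_iff (ht : IsGrade p c (α • v) t) (hp : ∀ k, 0 ≤ p k) (hc : 0 < c) (hα : 0 ≤ α) :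
    t ≤ α * u ↔ α * expectedExcess p v u ≤ c := by
  rw [ht.le_iff hp hc, expectedExcess_smul hα]

theorem mul_le_iff (ht : IsGrade p c (α • v) t) (hp : ∀ k, 0 ≤ p k) (hc : 0 < c) (hα : 0 ≤ α) :
    α * u ≤ t ↔ c ≤ α * expectedExcess p v u := by
  rw [ht.ge_iff hp hc, expectedExcess_smul hα]

end IsGrade

section Scaling

variable {τ : ℝ → ℝ} {s : Set ℝ}

theorem lipschitzOnWith_grade (hp : ∀ k, 0 ≤ p k) (hc : 0 < c)
    (hτ : ∀ α ∈ s, IsGrade p c (α • v) (τ α)) : LipschitzOnWith ‖v‖₊ τ s :=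
  LipschitzOnWith.of_dist_le_mul fun α hα β hβ =>
    calc dist (τ α) (τ β) ≤ dist (α • v) (β • v) := (hτ α hα).dist_le_dist (hτ β hβ) hp hc
      _ = ‖v‖₊ * dist α β := by
        rw [dist_eq_norm, ← sub_smul, norm_smul, mul_comm, dist_eq_norm, coe_nnnorm]

theorem exists_affine_grade (hp : ∀ k, 0 ≤ p k) (hc : 0 < c)
    (hτ : ∀ α ∈ s, IsGrade p c (α • v) (τ α))
    (hsign : ∀ k, (∀ α ∈ s, τ α ≤ α * v k) ∨ ∀ α ∈ s, α * v k ≤ τ α) :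
    ∃ a b : ℝ, ∀ α ∈ s, τ α = a * α + b := by
  classical
  let A : Finset ι := {k | ∀ α ∈ s, τ α ≤ α * v k}
  refine ⟨(∑ k ∈ A, p k * v k) / ∑ k ∈ A, p k, -c / ∑ k ∈ A, p k, fun α hα => ?_⟩
  have hA : ∀ k ∈ A, τ α ≤ (α • v) k := fun k hk => (Finset.mem_filter.1 hk).2 α hα
  have hA' : ∀ k ∉ A, (α • v) k ≤ τ α := fun k hk =>
    (hsign k).resolve_left (fun h => hk (Finset.mem_filter.2 ⟨Finset.mem_univ k, h⟩)) α hα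
  have hne : ∑ k ∈ A, p k ≠ 0 := (hτ α hα).sum_ne_zero hp hc hA hA'
  have hsmul : ∑ k ∈ A, p k * (α • v) k = α * ∑ k ∈ A, p k * v k := by
    rw [Finset.mul_sum]
    exact Finset.sum_congr rfl fun k _ => mul_left_comm _ _ _
  have heq := (hτ α hα).mul_sum_eq hA hA'
  rw [hsmul] at heq
  field_simp
  linarith

end Scaling

theorem forall_mul_le_or_forall_le_mul {𝕜 : Type*} [Field 𝕜] [LinearOrder 𝕜]
    [IsStrictOrderedRing 𝕜] {c d l r : 𝕜} (hc : 0 ≤ c) (hd : 0 ≤ d) (h : c / d ≤ l ∨ r ≤ c / d) :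
    (∀ α ∈ Icc l r, α * d ≤ c) ∨ ∀ α ∈ Icc l r, c ≤ α * d := by
  -- At `d = 0` the threshold has the junk value `0`, but there `α * d ≤ c` for every `α`.
  rcases hd.eq_or_lt with rfl | hd
  · exact .inl fun α _ => by rwa [mul_zero]
  rcases h with hl | hr
  · exact .inr fun α hα => (div_le_iff₀ hd).1 (hl.trans hα.1)
  · exact .inl fun α hα => (le_div_iff₀ hd).1 (hα.2.trans hr)

theorem exists_equiv_fin_monotone_comp {κ β : Type*} [Fintype κ] [LinearOrder β] {n : ℕ}
    (hn : Fintype.card κ = n) (f : κ → β) : ∃ e : Fin n ≃ κ, Monotone (f ∘ e) :=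
  let e := (Fintype.equivFinOfCardEq hn).symm
  ⟨(Tuple.sort (f ∘ e)).trans e, Tuple.monotone_sort (f ∘ e)⟩

theorem exists_monotone_breakpoints {β : Type*} [LinearOrder β] {l r : β} (hlr : l ≤ r)
    (θ : ι → β) (hθ : ∀ k, θ k ∈ Icc l r) :
    ∃ a : Fin (Fintype.card ι + 2) → β, a 0 = l ∧ a (Fin.last _) = r ∧ Monotone a ∧
      ∀ k, θ k ∈ range a := by
  let f : Option (Option ι) → β := fun i => i.elim l fun j => j.elim r θ
  have hf : ∀ i, f i ∈ Icc l r
    | none => left_mem_Icc.2 hlr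
    | some none => right_mem_Icc.2 hlr
    | some (some k) => hθ k
  obtain ⟨e, he⟩ := exists_equiv_fin_monotone_comp (n := Fintype.card ι + 2) (by simp) f
  have hrange : ∀ i, f i ∈ range (f ∘ e) := fun i => ⟨e.symm i, by simp⟩
  obtain ⟨i₀, hi₀⟩ := hrange none
  obtain ⟨i₁, hi₁⟩ := hrange (some none)
  exact ⟨f ∘ e, ((he (Fin.zero_le i₀)).trans_eq hi₀).antisymm (hf _).1,
    (hf _).2.antisymm (hi₁.symm.trans_le (he (Fin.le_last i₁))), he,
    fun k => hrange (some (some k))⟩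

theorem piecewiseLinearOn_of_thresholds {f : ℝ → ℝ} (θ : ι → ℝ)
    (hf : ∀ l r, Icc l r ⊆ Icc 0 1 → (∀ k, θ k ≤ l ∨ r ≤ θ k) →
      ∃ s b : ℝ, ∀ x ∈ Icc l r, f x = s * x + b) :
    PiecewiseLinearOn f (Fintype.card ι + 1) := by
  obtain ⟨a, ha0, ha1, hmono, hrange⟩ := exists_monotone_breakpoints zero_le_one
    (fun k => max 0 (min 1 (θ k))) fun k => ⟨le_max_left _ _, max_le zero_le_one (min_le_left _ _)⟩
  have ha : ∀ i, a i ∈ Icc 0 1 := fun i =>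
    ⟨ha0.symm.trans_le (hmono (Fin.zero_le i)), (hmono (Fin.le_last i)).trans_eq ha1⟩
  have hpiece : ∀ j : Fin (Fintype.card ι + 1), ∃ s b : ℝ,
      ∀ x ∈ Icc (a j.castSucc) (a j.succ), f x = s * x + b := by
    refine fun j => hf _ _ (Icc_subset_Icc (ha _).1 (ha _).2) fun k => ?_
    obtain ⟨i, hi⟩ := hrange k
    have hclamp : max 0 (min 1 (θ k)) ≤ a j.castSucc ∨ a j.succ ≤ max 0 (min 1 (θ k)) := by
      rw [← hi]
      exact (i.succ_le_or_le_castSucc j).symm.imp (fun h => hmono h) fun h => hmono h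
    -- Clamping a threshold to `[0,1]` does not move it across a subinterval of `[0,1]`.
    have hl : 0 ≤ a j.castSucc := (ha _).1
    have hr : a j.succ ≤ 1 := (ha _).2
    grind
  choose s b hsb using hpiece
  exact ⟨a, ha0, ha1, hmono, s, b, hsb⟩

theorem grade_piecewise_linear_general {τ : ℝ → ℝ} (hp : ∀ k, 0 ≤ p k) (hc : 0 < c)
    (hτ : ∀ α ∈ Icc (0 : ℝ) 1, IsGrade p c (α • v) (τ α)) :
    ContinuousOn τ (Icc (0 : ℝ) 1) ∧ PiecewiseLinearOn τ (Fintype.card ι + 1) := by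
  refine ⟨(lipschitzOnWith_grade hp hc hτ).continuousOn,
    piecewiseLinearOn_of_thresholds (fun k => c / expectedExcess p v (v k)) fun l r hlr hθ => ?_⟩
  refine exists_affine_grade hp hc (fun α hα => hτ α (hlr hα)) fun k => ?_
  exact (forall_mul_le_or_forall_le_mul hc.le (expectedExcess_nonneg hp) (hθ k)).imp
    (fun h α hα => ((hτ α (hlr hα)).le_mul_iff hp hc (hlr hα).1).2 (h α hα))
    fun h α hα => ((hτ α (hlr hα)).mul_le_iff hp hc (hlr hα).1).2 (h α hα)

/-- The grade function `α ↦ τ(α)` on `[0,1]` is continuous and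
piecewise linear with at most `m+1` pieces. -/
theorem grade_piecewise_linear (m : ℕ) (hm : 1 ≤ m) (v p : Fin m → ℝ)
    (hv : ∀ k, 0 ≤ v k) (hp : ∀ k, 0 ≤ p k) (hsum : ∑ k, p k = 1)
    (c : ℝ) (hc : 0 < c) (τ : ℝ → ℝ)
    (hτ : ∀ α ∈ Set.Icc (0 : ℝ) 1, ∑ k, p k * max (α * v k - τ α) 0 = c) :
    ContinuousOn τ (Set.Icc (0 : ℝ) 1) ∧ PiecewiseLinearOn τ (m + 1) := by
  simpa only [Fintype.card_fin] using grade_piecewise_linear_general hp hc hτ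
end

section
/- Let N ≥ 1, s ≥ 1, and let f_1, …, f_N : [0,1] → ℝ be continuous functions, each piecewise linear with at most s pieces. Then there exist an integer T with T ≤ N²·s + 1 and real numbers 0 = t_0 ≤ t_1 ≤ … ≤ t_T = 1 such that for every j ∈ {1,…,T}, every pair of indices a, b ∈ {1,…,N}, and all x, y ∈ [t_{j−1}, t_j], one has (f_a(x) − f_b(x))·(f_a(y) − f_b(y)) ≥ 0. -/
/-!
Cut `[0,1]` at the first zero of `f_a - f_b` after the left end of each piece of `f_a`, for every
ordered pair `(a, b)`: at most `N² s` points. Suppose `h = f_a - f_b` changes sign between `x` and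
`y`, let `z` be a zero of `h` in between, and let `p` be the larger of the left ends of the two
pieces containing `z`. On `[p, z]` the function `h` is affine and vanishes at `z`. Hence either it
vanishes identically there, so that `x < p` and `p` is the first zero after `p`, or `z` is. Either
way a cut falls strictly between `x` and `y`.
-/

open Set

section Partitions

variable {α : Type*} [LinearOrder α]

theorem exists_mem_Ioc_castSucc_succ {k : ℕ} (a : Fin (k + 1) → α) {z : α}
    (hz : z ∈ Ioc (a 0) (a (Fin.last k))) :
    ∃ j : Fin k, z ∈ Ioc (a j.castSucc) (a j.succ) := by
  by_contra! hnone
  have all_lt : ∀ i, a i < z := fun i => by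
    induction i using Fin.induction with
    | zero => exact hz.1
    | succ j ih => exact not_le.mp fun hle => hnone j ⟨ih, hle⟩
  exact (all_lt (Fin.last k)).not_ge hz.2

theorem notMem_Ioo_orderEmbOfFin {S : Finset α} {n : ℕ} (hn : S.card = n + 1) (j : Fin n)
    {w : α} (hw : w ∈ S) :
    w ∉ Ioo (S.orderEmbOfFin hn j.castSucc) (S.orderEmbOfFin hn j.succ) := by
  rw [← Finset.mem_coe, ← S.range_orderEmbOfFin hn] at hw
  obtain ⟨i, rfl⟩ := hw
  simp only [mem_Ioo, OrderEmbedding.lt_iff_lt, not_and, not_lt]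
  exact Fin.castSucc_lt_iff_succ_le.mp

theorem exists_strictMono_forall_notMem_Ioo {l u : α} (hlu : l < u) (S : Finset α) :
    ∃ T : ℕ, 1 ≤ T ∧ T ≤ S.card + 1 ∧
      ∃ t : Fin (T + 1) → α, t 0 = l ∧ t (Fin.last T) = u ∧ StrictMono t ∧
        ∀ j : Fin T, ∀ w ∈ S, w ∉ Ioo (t j.castSucc) (t j.succ) := by
  set R : Finset α := insert l (insert u {w ∈ S | w ∈ Icc l u}) with hR
  have hlR : l ∈ R := by simp [hR]
  have huR : u ∈ R := by simp [hR]
  have hR_subset : ∀ w ∈ R, w ∈ Icc l u := by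
    simp [hR, hlu.le]
  have one_lt_card : 1 < R.card := Finset.one_lt_card.mpr ⟨l, hlR, u, huR, hlu.ne⟩
  have card_le : R.card ≤ S.card + 2 :=
    (Finset.card_insert_le _ _).trans <| Nat.succ_le_succ <|
      (Finset.card_insert_le _ _).trans <| Nat.succ_le_succ <| Finset.card_filter_le _ _
  obtain ⟨T, hT⟩ : ∃ T, R.card = T + 1 := Nat.exists_eq_add_one.mpr (by omega)
  have t_mem : ∀ i, R.orderEmbOfFin hT i ∈ Icc l u := fun i =>
    hR_subset _ (R.orderEmbOfFin_mem hT i)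
  refine ⟨T, by omega, by omega, R.orderEmbOfFin hT, ?_, ?_,
    (R.orderEmbOfFin hT).strictMono, fun j w hw hwj => ?_⟩
  · refine (Finset.orderEmbOfFin_zero hT T.succ_pos).trans ?_
    exact le_antisymm (R.min'_le l hlR) (R.le_min' _ _ fun w hw => (hR_subset w hw).1)
  · refine (Finset.orderEmbOfFin_last hT T.succ_pos).trans ?_
    exact le_antisymm (R.max'_le _ _ fun w hw => (hR_subset w hw).2) (R.le_max' u huR)
  · have hwR : w ∈ R := by
      simp only [hR, Finset.mem_insert, Finset.mem_filter]
      exact Or.inr (Or.inr ⟨hw, (t_mem _).1.trans hwj.1.le, hwj.2.le.trans (t_mem _).2⟩)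
    exact notMem_Ioo_orderEmbOfFin hT j hwR hwj

end Partitions

/-- `f` coincides on the set `s` with a function `x ↦ m * x + b`. -/
def AffineOn {R : Type*} [CommRing R] (f : R → R) (s : Set R) : Prop :=
  ∃ m b : R, ∀ x ∈ s, f x = m * x + b

namespace AffineOn

variable {R : Type*} [CommRing R] {f g : R → R} {s t : Set R}

theorem mono (hf : AffineOn f t) (hst : s ⊆ t) : AffineOn f s :=
  let ⟨m, b, h⟩ := hf
  ⟨m, b, fun x hx => h x (hst hx)⟩

theorem sub (hf : AffineOn f s) (hg : AffineOn g s) : AffineOn (f - g) s := by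
  obtain ⟨m, b, hf⟩ := hf
  obtain ⟨m', b', hg⟩ := hg
  refine ⟨m - m', b - b', fun x hx => ?_⟩
  rw [Pi.sub_apply, hf x hx, hg x hx]
  ring

theorem eqOn_zero [NoZeroDivisors R] (hf : AffineOn f s) {w z : R} (hw : w ∈ s) (hz : z ∈ s)
    (hwz : w ≠ z) (hfw : f w = 0) (hfz : f z = 0) : EqOn f 0 s := by
  obtain ⟨m, b, hf⟩ := hf
  rw [hf w hw] at hfw
  rw [hf z hz] at hfz
  have slope_mul : m * (w - z) = 0 := by linear_combination hfw - hfz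
  have slope : m = 0 := (mul_eq_zero.mp slope_mul).resolve_right (sub_ne_zero.mpr hwz)
  have intercept : b = 0 := by simpa [slope] using hfw
  intro x hx
  simp [hf x hx, slope, intercept]

end AffineOn

section FirstZero

variable {α β : Type*} [ConditionallyCompleteLinearOrder α]

/-- The first zero of `h` in `[p, ∞)`. If `h` has zeros there but no least one, this is their
infimum; if `h` has none, it is the junk value `sInf ∅`. -/
noncomputable def firstZero [Zero β] (h : α → β) (p : α) : α :=
  sInf {w | p ≤ w ∧ h w = 0}

theorem firstZero_sub_comm [AddGroup β] (f g : α → β) : firstZero (f - g) = firstZero (g - f) := by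
  funext p
  simp only [firstZero, Pi.sub_apply, sub_eq_zero, eq_comm]

variable [Zero β] {h : α → β} {p z c : α}

theorem firstZero_le (hpz : p ≤ z) (hz : h z = 0) : firstZero h p ≤ z :=
  csInf_le ⟨p, fun _ hw => hw.1⟩ ⟨hpz, hz⟩

theorem le_firstZero (hpz : p ≤ z) (hz : h z = 0) (hc : ∀ w, p ≤ w → h w = 0 → c ≤ w) :
    c ≤ firstZero h p :=
  le_csInf ⟨z, hpz, hz⟩ fun w hw => hc w hw.1 hw.2

end FirstZero

theorem AffineOn.lt_firstZero {h : ℝ → ℝ} {p x z : ℝ} (hh : AffineOn h (Icc p z))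
    (hpz : p ≤ z) (hz : h z = 0) (hx : h x ≠ 0) (hxz : x < z) : x < firstZero h p := by
  obtain hxp | hpx := lt_or_ge x p
  · exact hxp.trans_le (le_firstZero hpz hz fun _ hpw _ => hpw)
  · refine hxz.trans_le (le_firstZero hpz hz fun w hpw hw => ?_)
    by_contra! hwz
    exact hx (hh.eqOn_zero ⟨hpw, hwz.le⟩ ⟨hpz, le_rfl⟩ hwz.ne hw hz ⟨hpx, hxz.le⟩)

theorem exists_mem_Ioo_eq_zero_of_mul_neg {α : Type*} [ConditionallyCompleteLinearOrder α]
    [TopologicalSpace α] [OrderTopology α] [DenselyOrdered α] {h : α → ℝ} {x y : α} (hxy : x ≤ y)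
    (hc : ContinuousOn h (Icc x y)) (hneg : h x * h y < 0) : ∃ z ∈ Ioo x y, h z = 0 := by
  obtain ⟨hx, hy⟩ | ⟨hx, hy⟩ := mul_neg_iff.mp hneg
  · exact intermediate_value_Ioo' hxy hc ⟨hy, hx⟩
  · exact intermediate_value_Ioo hxy hc ⟨hx, hy⟩

/-- Every `z ∈ I` is the right end of an interval `[p, z]` with `p ∈ P` on which `f` is affine.
For a piecewise linear `f` one takes for `P` the left ends of its pieces; unlike a list of
breakpoints, such sets combine by plain union when functions are subtracted. -/
def AffineFrom (f : ℝ → ℝ) (P I : Set ℝ) : Prop :=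
  ∀ z ∈ I, ∃ p ∈ P, p ≤ z ∧ AffineOn f (Icc p z)

namespace AffineFrom

variable {f g h : ℝ → ℝ} {P Q I J : Set ℝ}

theorem mono (hf : AffineFrom f P J) (hIJ : I ⊆ J) : AffineFrom f P I :=
  fun z hz => hf z (hIJ hz)

theorem sub (hf : AffineFrom f P I) (hg : AffineFrom g Q I) :
    AffineFrom (f - g) (P ∪ Q) I := by
  intro z hz
  obtain ⟨p, hp, hpz, hfp⟩ := hf z hz
  obtain ⟨q, hq, hqz, hgq⟩ := hg z hz
  refine ⟨max p q, ?_, max_le hpz hqz,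
    (hfp.mono (Icc_subset_Icc_left (le_max_left p q))).sub
      (hgq.mono (Icc_subset_Icc_left (le_max_right p q)))⟩
  obtain hmax | hmax := max_choice p q
  · rw [hmax]
    exact Or.inl hp
  · rw [hmax]
    exact Or.inr hq

theorem exists_firstZero_mem_Ioo {x y : ℝ} (hP : AffineFrom h P (Ioo x y)) (hxy : x ≤ y)
    (hc : ContinuousOn h (Icc x y)) (hneg : h x * h y < 0) :
    ∃ p ∈ P, firstZero h p ∈ Ioo x y := by
  obtain ⟨z, hz, hz0⟩ := exists_mem_Ioo_eq_zero_of_mul_neg hxy hc hneg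
  obtain ⟨p, hp, hpz, haff⟩ := hP z hz
  exact ⟨p, hp, haff.lt_firstZero hpz hz0 (left_ne_zero_of_mul hneg.ne) hz.1,
    (firstZero_le hpz hz0).trans_lt hz.2⟩

end AffineFrom

theorem PiecewiseLinearOn.exists_affineFrom {f : ℝ → ℝ} {k : ℕ} (hf : PiecewiseLinearOn f k) :
    ∃ P : Finset ℝ, P.card ≤ k ∧ AffineFrom f P (Ioc 0 1) := by
  obtain ⟨a, a_zero, a_last, -, s, b, hpiece⟩ := hf
  refine ⟨Finset.univ.image fun j : Fin k => a j.castSucc,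
    Finset.card_image_le.trans_eq (Finset.card_fin k), fun z hz => ?_⟩
  rw [← a_zero, ← a_last] at hz
  obtain ⟨j, hj⟩ := exists_mem_Ioc_castSucc_succ a hz
  exact ⟨a j.castSucc, by simp, hj.1.le, s j, b j,
    fun w hw => hpiece j w ⟨hw.1, hw.2.trans hj.2⟩⟩

section CriticalValues

variable {ι : Type*} [Fintype ι] {f : ι → ℝ → ℝ} {P : ι → Finset ℝ}

/-- The critical values of the family `f`, computed from sets `P a` of left ends of the pieces of
`f a`. In the pair `(a, b)` only starting points from `P a` are used; those from `P b` occur in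
the pair `(b, a)`, which is what keeps the count at `N² s` rather than `2 N² s`. -/
noncomputable def criticalValues (f : ι → ℝ → ℝ) (P : ι → Finset ℝ) : Finset ℝ :=
  Finset.univ.biUnion fun q : ι × ι => (P q.1).image (firstZero (f q.1 - f q.2))

theorem card_criticalValues_le {s : ℕ} (hP : ∀ a, (P a).card ≤ s) :
    (criticalValues f P).card ≤ Fintype.card ι ^ 2 * s := by
  rw [sq, ← Fintype.card_prod]
  exact Finset.card_biUnion_le_card_mul _ _ _ fun q _ => Finset.card_image_le.trans (hP q.1)

theorem firstZero_mem_criticalValues (a b : ι) {p : ℝ} (hp : p ∈ P a ∪ P b) :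
    firstZero (f a - f b) p ∈ criticalValues f P := by
  simp only [criticalValues, Finset.mem_biUnion, Finset.mem_univ, true_and, Finset.mem_image]
  obtain ha | hb := Finset.mem_union.mp hp
  · exact ⟨(a, b), p, ha, rfl⟩
  · exact ⟨(b, a), p, hb, congrFun (firstZero_sub_comm (f b) (f a)) p⟩

theorem sub_mul_sub_nonneg_of_forall_criticalValues_notMem {x y : ℝ}
    (hc : ∀ a, ContinuousOn (f a) (Icc x y)) (hP : ∀ a, AffineFrom (f a) (P a) (Ioo x y))
    (hxy : x ≤ y) (hcrit : ∀ w ∈ criticalValues f P, w ∉ Ioo x y) (a b : ι) :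
    0 ≤ (f a x - f b x) * (f a y - f b y) := by
  by_contra! hneg
  obtain ⟨p, hp, hmem⟩ :=
    ((hP a).sub (hP b)).exists_firstZero_mem_Ioo hxy ((hc a).sub (hc b)) hneg
  exact hcrit _ (firstZero_mem_criticalValues a b (by simpa using hp)) hmem

end CriticalValues

/-- For `N` continuous piecewise linear functions on `[0,1]`, each
with at most `s` pieces, there is a partition of `[0,1]` into `T ≤ N²·s + 1`
subintervals on each of which every pairwise difference `f_a − f_b` does not
change sign. -/
theorem sign_constancy_family_pwl (N s : ℕ) (hN : 1 ≤ N) (hs : 1 ≤ s)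
    (f : Fin N → ℝ → ℝ)
    (hfc : ∀ a, ContinuousOn (f a) (Set.Icc (0 : ℝ) 1))
    (hf : ∀ a, PiecewiseLinearOn (f a) s) :
    ∃ T : ℕ, 1 ≤ T ∧ T ≤ N ^ 2 * s + 1 ∧
      ∃ t : Fin (T + 1) → ℝ, t 0 = 0 ∧ t (Fin.last T) = 1 ∧ Monotone t ∧
        ∀ j : Fin T, ∀ a b : Fin N,
          ∀ x ∈ Set.Icc (t j.castSucc) (t j.succ),
            ∀ y ∈ Set.Icc (t j.castSucc) (t j.succ),
              0 ≤ (f a x - f b x) * (f a y - f b y) := by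
  choose P hPcard hP using fun a => (hf a).exists_affineFrom
  have hcard : (criticalValues f P).card ≤ N ^ 2 * s := by
    simpa only [Fintype.card_fin] using card_criticalValues_le (f := f) hPcard
  obtain ⟨T, hT, hTcard, t, t_zero, t_last, ht, hcrit⟩ :=
    exists_strictMono_forall_notMem_Ioo (zero_lt_one (α := ℝ)) (criticalValues f P)
  refine ⟨T, hT, hTcard.trans (Nat.succ_le_succ hcard), t, t_zero, t_last, ht.monotone,
    fun j a b x hx y hy => ?_⟩
  wlog hxy : x ≤ y generalizing x y
  · rw [mul_comm]
    exact this y hy x hx (le_of_not_ge hxy)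
  have hx0 : 0 ≤ x := t_zero ▸ (ht.monotone (Fin.zero_le _)).trans hx.1
  have hy1 : y ≤ 1 := t_last ▸ hy.2.trans (ht.monotone (Fin.le_last _))
  exact sub_mul_sub_nonneg_of_forall_criticalValues_notMem
    (fun c => (hfc c).mono (Icc_subset_Icc hx0 hy1))
    (fun c => (hP c).mono (Ioo_subset_Ioc_self.trans (Ioc_subset_Ioc hx0 hy1)))
    hxy (fun w hw hwxy => hcrit j w hw (Ioo_subset_Ioo hx.1 hy.2 hwxy)) a b
end
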